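/- Let Ω ⊆ ℝⁿ be open, φ : ℝ → ℝ continuously differentiable, c ∈ ℝ, and let u : Ω → ℝ be smooth with a ≤ u ≤ b on Ω for some reals a ≤ b, satisfying the equation −Δu = c·φ(u) pointwise on Ω. Set c₁ = max(0, sup_{t∈[a,b]} c·φ′(t)). Then for every ε > 0 the function f_ε = (‖∇u‖² + ε²)^{1/2} satisfies −Δf_ε ≤ c₁·f_ε pointwise on Ω; consequently, −Δ‖∇u‖ ≤ c₁·‖∇u‖ holds in the distributional sense on Ω. -/

import Mathlib

/-!
For a vector-valued map `w` with `w x ≠ 0`, expand `Δ‖w‖²` twice: as the square of a vector,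
`½Δ‖w‖² = ∑ ‖∂ᵢw‖² + ⟪w, Δw⟫`, and as the square of the scalar `‖w‖`,
`½Δ‖w‖² = ∑ (∂ᵢ‖w‖)² + ‖w‖ Δ‖w‖`. Kato's inequality `|∂ᵢ‖w‖| ≤ ‖∂ᵢw‖` then gives
`⟪w, Δw⟫ ≤ ‖w‖ Δ‖w‖`. The regularization `f_ε` is the norm of the nowhere vanishing map
`W = (∇u, ε)`, and `Δ` commutes with `∇`, so `⟪W, ΔW⟫ = ⟪∇u, ∇Δu⟫ = -c φ'(u) ‖∇u‖² ≥ -c₁ f_ε²`;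
dividing by `f_ε` gives the pointwise inequality.

For the distributional one, move the Laplacian from `f_ε` to the test function by Green's identity
and let `ε → 0` by dominated convergence.
-/

open MeasureTheory

/-- The Euclidean (analyst's) Laplacian `Δf = ∑ i ∂²f/∂xᵢ²`. -/
noncomputable def lap {n : ℕ} (f : EuclideanSpace ℝ (Fin n) → ℝ)
    (x : EuclideanSpace ℝ (Fin n)) : ℝ :=
  ∑ i : Fin n,
    fderiv ℝ (fun y => fderiv ℝ f y (EuclideanSpace.single i 1)) x (EuclideanSpace.single i 1)

open Filter Topology Laplacian Gradient RealInnerProductSpace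

section SecondDerivative

variable {E F : Type*} [NormedAddCommGroup E] [NormedSpace ℝ E]
  [NormedAddCommGroup F] [NormedSpace ℝ F] {f : E → F} {x : E}

lemma contDiffAt_fderiv_apply {n m : WithTop ℕ∞} (hf : ContDiffAt ℝ n f x) (hmn : m + 1 ≤ n)
    (v : E) : ContDiffAt ℝ m (fun y => fderiv ℝ f y v) x :=
  (hf.fderiv_right hmn).clm_apply contDiffAt_const

lemma fderiv_fderiv_apply (hf : ContDiffAt ℝ 2 f x) (v w : E) :
    fderiv ℝ (fun y => fderiv ℝ f y v) x w = fderiv ℝ (fderiv ℝ f) x w v := by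
  have hf' : DifferentiableAt ℝ (fderiv ℝ f) x :=
    (hf.fderiv_right (m := 1) (by norm_num)).differentiableAt (by norm_num)
  simp [fderiv_clm_apply hf' (differentiableAt_const v)]

lemma fderiv_fderiv_apply_comm (hf : ContDiffAt ℝ 2 f x) (v w : E) :
    fderiv ℝ (fun y => fderiv ℝ f y v) x w = fderiv ℝ (fun y => fderiv ℝ f y w) x v := by
  rw [fderiv_fderiv_apply hf, fderiv_fderiv_apply hf,
    (hf.isSymmSndFDerivAt (by simp)).eq]

end SecondDerivative

section Laplacian

variable {E F : Type*} [NormedAddCommGroup E] [InnerProductSpace ℝ E] [FiniteDimensional ℝ E]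
  [NormedAddCommGroup F] [NormedSpace ℝ F] {f : E → F} {x : E}

lemma laplacian_eq_sum_fderiv_fderiv {ι : Type*} [Fintype ι] (b : OrthonormalBasis ι ℝ E)
    (hf : ContDiffAt ℝ 2 f x) :
    Δ f x = ∑ i, fderiv ℝ (fun y => fderiv ℝ f y (b i)) x (b i) := by
  simp [InnerProductSpace.laplacian_eq_iteratedFDeriv_orthonormalBasis f b,
    iteratedFDeriv_two_apply, fderiv_fderiv_apply hf]

lemma eventuallyEq_laplacian_sum_fderiv_fderiv {ι : Type*} [Fintype ι]
    (b : OrthonormalBasis ι ℝ E) (hf : ContDiffAt ℝ 2 f x) :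
    Δ f =ᶠ[𝓝 x] fun z => ∑ i, fderiv ℝ (fun y => fderiv ℝ f y (b i)) z (b i) :=
  (hf.eventually (by simp)).mono fun _ => laplacian_eq_sum_fderiv_fderiv b

lemma continuousAt_laplacian (hf : ContDiffAt ℝ 2 f x) : ContinuousAt (Δ f) x := by
  refine ContinuousAt.congr (tendsto_finsetSum _ fun i _ => ?_)
    (eventuallyEq_laplacian_sum_fderiv_fderiv (stdOrthonormalBasis ℝ E) hf).symm
  have hfi := contDiffAt_fderiv_apply (m := 1) hf (by norm_num) (stdOrthonormalBasis ℝ E i)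
  exact (contDiffAt_fderiv_apply (m := 0) hfi (by norm_num) _).continuousAt

lemma tsupport_laplacian_subset (f : E → F) : tsupport (Δ f) ⊆ tsupport f := by
  refine closure_minimal (fun x hx => ?_) (isClosed_tsupport f)
  contrapose! hx
  have hfx : Δ f x = Δ (fun _ : E => (0 : F)) x :=
    (InnerProductSpace.laplacian_congr_nhds (notMem_tsupport_iff_eventuallyEq.1 hx)).eq_of_nhds
  simp [hfx]

lemma laplacian_fderiv_apply (hf : ContDiffAt ℝ 3 f x) (v : E) :
    Δ (fun y => fderiv ℝ f y v) x = fderiv ℝ (Δ f) x v := by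
  set b := stdOrthonormalBasis ℝ E
  have hfi (i) : ContDiffAt ℝ 2 (fun y => fderiv ℝ f y (b i)) x :=
    contDiffAt_fderiv_apply hf (by norm_num) (b i)
  have hfii (i) : DifferentiableAt ℝ (fun z => fderiv ℝ (fun y => fderiv ℝ f y (b i)) z (b i)) x :=
    (contDiffAt_fderiv_apply (m := 1) (hfi i) (by norm_num) (b i)).differentiableAt (by norm_num)
  have hcomm (i) : (fun z => fderiv ℝ (fun y => fderiv ℝ f y v) z (b i)) =ᶠ[𝓝 x]
      fun z => fderiv ℝ (fun y => fderiv ℝ f y (b i)) z v :=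
    (hf.eventually (by simp)).mono fun z hz =>
      fderiv_fderiv_apply_comm (hz.of_le (by norm_num)) v (b i)
  calc Δ (fun y => fderiv ℝ f y v) x
      = ∑ i, fderiv ℝ (fun z => fderiv ℝ (fun y => fderiv ℝ f y v) z (b i)) x (b i) :=
        laplacian_eq_sum_fderiv_fderiv b (contDiffAt_fderiv_apply hf (by norm_num) v)
    _ = ∑ i, fderiv ℝ (fun z => fderiv ℝ (fun y => fderiv ℝ f y (b i)) z (b i)) x v := by
        refine Finset.sum_congr rfl fun i _ => ?_
        rw [(hcomm i).fderiv_eq, fderiv_fderiv_apply_comm (hfi i)]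
    _ = fderiv ℝ (Δ f) x v := by
        rw [(eventuallyEq_laplacian_sum_fderiv_fderiv b (hf.of_le (by norm_num))).fderiv_eq,
          fderiv_fun_sum fun i _ => hfii i, sum_apply]

end Laplacian

section Gradient

variable {E : Type*} [NormedAddCommGroup E] [InnerProductSpace ℝ E]

lemma contDiffAt_gradient [CompleteSpace E] {u : E → ℝ} {x : E} {n m : WithTop ℕ∞}
    (hu : ContDiffAt ℝ n u x) (hmn : m + 1 ≤ n) : ContDiffAt ℝ m (∇ u) x :=
  (InnerProductSpace.toDual ℝ E).symm.contDiff.contDiffAt.comp x (hu.fderiv_right hmn)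

variable [FiniteDimensional ℝ E] {u : E → ℝ} {x : E}

lemma laplacian_gradient (hu : ContDiffAt ℝ 3 u x) : Δ (∇ u) x = ∇ (Δ u) x := by
  refine ext_inner_left ℝ fun v => ?_
  have hgrad : ContDiffAt ℝ 2 (∇ u) x := contDiffAt_gradient hu (by norm_num)
  have hinner : innerSL ℝ v ∘ ∇ u = fun y => fderiv ℝ u y v := by
    ext y; simp
  have := hgrad.laplacian_CLM_comp_left (l := innerSL ℝ v)
  rw [hinner, laplacian_fderiv_apply hu] at this
  simpa using this.symm

lemma laplacian_gradient_of_neg_laplacian_eq {φ : ℝ → ℝ} (hu : ContDiffAt ℝ 3 u x)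
    (hφ : DifferentiableAt ℝ φ (u x)) (heq : ∀ᶠ y in 𝓝 x, -Δ u y = φ (u y)) :
    Δ (∇ u) x = -(deriv φ (u x) • ∇ u x) := by
  have hlap : Δ u =ᶠ[𝓝 x] fun y => -φ (u y) := heq.mono fun y hy => neg_eq_iff_eq_neg.1 hy
  have hcomp : HasFDerivAt (fun y => -φ (u y)) (-(deriv φ (u x) • fderiv ℝ u x)) x :=
    (hφ.hasDerivAt.comp_hasFDerivAt x (hu.differentiableAt (by norm_num)).hasFDerivAt).neg
  rw [laplacian_gradient hu, gradient, hlap.fderiv_eq, hcomp.fderiv]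
  simp [gradient]

end Gradient

section Kato

variable {E F : Type*} [NormedAddCommGroup E] [NormedAddCommGroup F] [InnerProductSpace ℝ F]
  {w : E → F} {x : E}

lemma fderiv_norm_sq_comp_apply [NormedSpace ℝ E] (hw : DifferentiableAt ℝ w x) (v : E) :
    fderiv ℝ (fun y => ‖w y‖ ^ 2) x v = 2 * ⟪w x, fderiv ℝ w x v⟫ := by
  simp [hw.hasFDerivAt.norm_sq.fderiv]

lemma fderiv_fderiv_norm_sq_comp_apply [NormedSpace ℝ E] (hw : ContDiffAt ℝ 2 w x) (v : E) :
    fderiv ℝ (fun z => fderiv ℝ (fun y => ‖w y‖ ^ 2) z v) x v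
      = 2 * (‖fderiv ℝ w x v‖ ^ 2 + ⟪w x, fderiv ℝ (fun y => fderiv ℝ w y v) x v⟫) := by
  have hfst : (fun z => fderiv ℝ (fun y => ‖w y‖ ^ 2) z v) =ᶠ[𝓝 x]
      fun z => 2 * ⟪w z, fderiv ℝ w z v⟫ :=
    (hw.eventually (by simp)).mono fun z hz =>
      fderiv_norm_sq_comp_apply (hz.differentiableAt (by norm_num)) v
  have hw' : DifferentiableAt ℝ w x := hw.differentiableAt (by norm_num)
  have hwv : DifferentiableAt ℝ (fun y => fderiv ℝ w y v) x :=
    (contDiffAt_fderiv_apply (m := 1) hw (by norm_num) v).differentiableAt (by norm_num)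
  rw [hfst.fderiv_eq, fderiv_const_mul (hw'.inner ℝ hwv), smul_apply,
    fderiv_inner_apply ℝ hw' hwv, real_inner_self_eq_norm_sq, smul_eq_mul, add_comm]

lemma abs_fderiv_norm_apply_le [NormedSpace ℝ E] (hw : DifferentiableAt ℝ w x) (hx : w x ≠ 0)
    (v : E) : |fderiv ℝ (fun y => ‖w y‖) x v| ≤ ‖fderiv ℝ w x v‖ := by
  have hnorm : DifferentiableAt ℝ (norm : F → ℝ) (w x) :=
    (contDiffAt_norm ℝ hx (n := 1)).differentiableAt (by norm_num)
  have hbound : ‖fderiv ℝ (norm : F → ℝ) (w x)‖ ≤ (1 : NNReal) :=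
    norm_fderiv_le_of_lipschitz ℝ lipschitzWith_one_norm
  have hchain : fderiv ℝ (fun y => ‖w y‖) x v = fderiv ℝ norm (w x) (fderiv ℝ w x v) := by
    rw [← Function.comp_def, fderiv_comp x hnorm hw, ContinuousLinearMap.comp_apply]
  rw [hchain, ← Real.norm_eq_abs]
  simpa using ContinuousLinearMap.le_of_opNorm_le _ hbound (fderiv ℝ w x v)

variable [InnerProductSpace ℝ E] [FiniteDimensional ℝ E]

lemma laplacian_norm_sq {ι : Type*} [Fintype ι] (b : OrthonormalBasis ι ℝ E)
    (hw : ContDiffAt ℝ 2 w x) :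
    Δ (fun y => ‖w y‖ ^ 2) x = 2 * (∑ i, ‖fderiv ℝ w x (b i)‖ ^ 2 + ⟪w x, Δ w x⟫) := by
  rw [laplacian_eq_sum_fderiv_fderiv b (hw.norm_sq ℝ), laplacian_eq_sum_fderiv_fderiv b hw]
  simp only [fderiv_fderiv_norm_sq_comp_apply hw, ← Finset.mul_sum, Finset.sum_add_distrib,
    inner_sum]

lemma inner_laplacian_le_norm_mul_laplacian_norm (hw : ContDiffAt ℝ 2 w x) (hx : w x ≠ 0) :
    ⟪w x, Δ w x⟫ ≤ ‖w x‖ * Δ (fun y => ‖w y‖) x := by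
  set b := stdOrthonormalBasis ℝ E
  have hvector := laplacian_norm_sq b hw
  have hscalar := laplacian_norm_sq b (hw.norm ℝ hx)
  simp only [Real.norm_eq_abs, sq_abs, Real.inner_apply] at hscalar
  have hkato : ∑ i, fderiv ℝ (fun y => ‖w y‖) x (b i) ^ 2 ≤ ∑ i, ‖fderiv ℝ w x (b i)‖ ^ 2 :=
    Finset.sum_le_sum fun i _ => sq_le_sq.2 <| by
      simpa using abs_fderiv_norm_apply_le (hw.differentiableAt (by norm_num)) hx (b i)
  linarith

end Kato

section RegularizedNorm

variable {E F : Type*} [NormedAddCommGroup E] [NormedAddCommGroup F] [InnerProductSpace ℝ F]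
  {w : E → F} {x : E} {ε K : ℝ}

lemma contDiffAt_sqrt_norm_sq_add_sq [NormedSpace ℝ E] {n : WithTop ℕ∞}
    (hw : ContDiffAt ℝ n w x) (hε : ε ≠ 0) :
    ContDiffAt ℝ n (fun y => √(‖w y‖ ^ 2 + ε ^ 2)) x :=
  ((hw.norm_sq ℝ).add contDiffAt_const).sqrt (by positivity)

variable [InnerProductSpace ℝ E] [FiniteDimensional ℝ E]

/-- `√(‖w‖² + ε²)` is the norm of the nowhere vanishing map `(w, ε)` into `F × ℝ`. -/
lemma inner_laplacian_le_sqrt_mul_laplacian_sqrt (hw : ContDiffAt ℝ 2 w x) (hε : ε ≠ 0) :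
    ⟪w x, Δ w x⟫ ≤ √(‖w x‖ ^ 2 + ε ^ 2) * Δ (fun y => √(‖w y‖ ^ 2 + ε ^ 2)) x := by
  let inl : F →L[ℝ] WithLp 2 (F × ℝ) :=
    (WithLp.prodContinuousLinearEquiv 2 ℝ F ℝ).symm ∘L ContinuousLinearMap.inl ℝ F ℝ
  let W : E → WithLp 2 (F × ℝ) := inl ∘ w + fun _ => WithLp.toLp 2 (0, ε)
  have hinl : ContDiffAt ℝ 2 (inl ∘ w) x := inl.contDiff.contDiffAt.comp x hw
  have hW : ContDiffAt ℝ 2 W x := hinl.add contDiffAt_const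
  have hnorm (y : E) : ‖W y‖ = √(‖w y‖ ^ 2 + ε ^ 2) := by
    simp [W, inl, WithLp.prod_norm_eq_of_L2]
  have hlap : Δ W x = inl (Δ w x) := by
    rw [hinl.laplacian_add contDiffAt_const, hw.laplacian_CLM_comp_left]
    simp
  have hinner : ⟪W x, Δ W x⟫ = ⟪w x, Δ w x⟫ := by
    simp [hlap, W, inl, WithLp.prod_inner_apply]
  have hWx : W x ≠ 0 := norm_pos_iff.1 (by rw [hnorm]; positivity)
  simpa only [hnorm, hinner] using inner_laplacian_le_norm_mul_laplacian_norm hW hWx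

lemma neg_laplacian_sqrt_norm_sq_add_sq_le (hw : ContDiffAt ℝ 2 w x) (hε : ε ≠ 0) (hK : 0 ≤ K)
    (hsub : -⟪w x, Δ w x⟫ ≤ K * ‖w x‖ ^ 2) :
    -Δ (fun y => √(‖w y‖ ^ 2 + ε ^ 2)) x ≤ K * √(‖w x‖ ^ 2 + ε ^ 2) := by
  have hpos : 0 < √(‖w x‖ ^ 2 + ε ^ 2) := by positivity
  refine le_of_mul_le_mul_left ?_ hpos
  calc √(‖w x‖ ^ 2 + ε ^ 2) * -Δ (fun y => √(‖w y‖ ^ 2 + ε ^ 2)) x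
      ≤ -⟪w x, Δ w x⟫ := by
        linarith [inner_laplacian_le_sqrt_mul_laplacian_sqrt hw hε]
    _ ≤ K * (‖w x‖ ^ 2 + ε ^ 2) := by
        linarith [mul_nonneg hK (sq_nonneg ε)]
    _ = √(‖w x‖ ^ 2 + ε ^ 2) * (K * √(‖w x‖ ^ 2 + ε ^ 2)) := by
        rw [mul_left_comm, Real.mul_self_sqrt (by positivity)]

end RegularizedNorm

section Integrability

variable {X F : Type*} [TopologicalSpace X] [MeasurableSpace X] [OpensMeasurableSpace X]
  {μ : Measure X} [IsFiniteMeasureOnCompacts μ] [NormedAddCommGroup F]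

lemma integrable_smul_of_continuousAt_tsupport [NormedSpace ℝ F] {h : X → ℝ} {g : X → F}
    (hh : ∀ x ∈ tsupport g, ContinuousAt h x) (hg : Continuous g) (hgc : HasCompactSupport g) :
    Integrable (fun x => h x • g x) μ :=
  (continuous_of_tsupport fun x hx =>
    (hh x (tsupport_smul_subset_right h g hx)).smul hg.continuousAt).integrable_of_hasCompactSupport
      hgc.smul_left

lemma tendsto_integral_sqrt_norm_sq_add_sq_mul {w : X → F} {g : X → ℝ}
    (hw : ∀ x ∈ tsupport g, ContinuousAt w x) (hg : Continuous g) (hgc : HasCompactSupport g) :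
    Tendsto (fun ε : ℝ => ∫ x, √(‖w x‖ ^ 2 + ε ^ 2) * g x ∂μ) (𝓝 0)
      (𝓝 (∫ x, ‖w x‖ * g x ∂μ)) := by
  have hint (ε : ℝ) : Integrable (fun x => √(‖w x‖ ^ 2 + ε ^ 2) * g x) μ :=
    integrable_smul_of_continuousAt_tsupport
      (fun x hx => (((hw x hx).norm.pow 2).add continuousAt_const).sqrt) hg hgc
  refine tendsto_integral_filter_of_dominated_convergence
    (fun x => ‖√(‖w x‖ ^ 2 + 1 ^ 2) * g x‖) (.of_forall fun ε => (hint ε).aestronglyMeasurable) ?_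
    (hint 1).norm (.of_forall fun x => ?_)
  · filter_upwards [Metric.ball_mem_nhds (0 : ℝ) one_pos] with ε hε
    refine .of_forall fun x => ?_
    have hε1 : ε ^ 2 ≤ 1 ^ 2 := sq_le_sq.2 (by simpa using (mem_ball_zero_iff.1 hε).le)
    simp only [norm_mul, Real.norm_of_nonneg (Real.sqrt_nonneg _)]
    gcongr
  · have hcont : Continuous fun ε : ℝ => √(‖w x‖ ^ 2 + ε ^ 2) * g x := by fun_prop
    simpa using hcont.tendsto 0

end Integrability

section IntegrationByParts

variable {E F : Type*} [NormedAddCommGroup E] [MeasurableSpace E] [BorelSpace E]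
  [NormedAddCommGroup F] [NormedSpace ℝ F] {μ : Measure E}

lemma integral_smul_fderiv_apply_eq_neg [NormedSpace ℝ E] [FiniteDimensional ℝ E]
    [μ.IsAddHaarMeasure] {h : E → ℝ} {g : E → F}
    (hh : ∀ x ∈ tsupport g, ContDiffAt ℝ 1 h x) (hg : ContDiff ℝ 1 g) (hgc : HasCompactSupport g)
    (v : E) : ∫ x, h x • fderiv ℝ g x v ∂μ = -∫ x, fderiv ℝ h x v • g x ∂μ := by
  have hdg : Continuous fun x => fderiv ℝ g x v :=
    (hg.continuous_fderiv (by norm_num)).clm_apply continuous_const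
  refine integral_smul_fderiv_eq_neg_fderiv_smul_of_integrable ?_ ?_ ?_
    (fun x hx => (hh x hx).differentiableAt (by norm_num))
    (fun x _ => hg.contDiffAt.differentiableAt (by norm_num))
  · exact integrable_smul_of_continuousAt_tsupport (fun x hx =>
      (contDiffAt_fderiv_apply (m := 0) (hh x hx) (by norm_num) v).continuousAt) hg.continuous hgc
  · exact integrable_smul_of_continuousAt_tsupport
      (fun x hx => (hh x (tsupport_fderiv_apply_subset ℝ v hx)).continuousAt) hdg
      (hgc.fderiv_apply ℝ v)
  · exact integrable_smul_of_continuousAt_tsupport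
      (fun x hx => (hh x hx).continuousAt) hg.continuous hgc

lemma integral_smul_fderiv_fderiv_apply [NormedSpace ℝ E] [FiniteDimensional ℝ E]
    [μ.IsAddHaarMeasure] {h : E → ℝ} {g : E → F}
    (hh : ∀ x ∈ tsupport g, ContDiffAt ℝ 2 h x) (hg : ContDiff ℝ 2 g) (hgc : HasCompactSupport g)
    (v w : E) :
    ∫ x, h x • fderiv ℝ (fun y => fderiv ℝ g y v) x w ∂μ
      = ∫ x, fderiv ℝ (fun y => fderiv ℝ h y w) x v • g x ∂μ := by
  have hdg : ContDiff ℝ 1 fun y => fderiv ℝ g y v :=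
    contDiff_iff_contDiffAt.2 fun x => contDiffAt_fderiv_apply hg.contDiffAt (by norm_num) v
  have hdh : ∀ x ∈ tsupport g, ContDiffAt ℝ 1 (fun y => fderiv ℝ h y w) x :=
    fun x hx => contDiffAt_fderiv_apply (hh x hx) (by norm_num) w
  rw [integral_smul_fderiv_apply_eq_neg
      (fun x hx => (hh x (tsupport_fderiv_apply_subset ℝ v hx)).of_le (by norm_num)) hdg
      (hgc.fderiv_apply ℝ v),
    integral_smul_fderiv_apply_eq_neg hdh (hg.of_le (by norm_num)) hgc, neg_neg]

lemma integrable_fderiv_fderiv_apply_smul [NormedSpace ℝ E] [IsFiniteMeasureOnCompacts μ]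
    {h : E → ℝ} {g : E → F} (hh : ∀ x ∈ tsupport g, ContDiffAt ℝ 2 h x) (hg : Continuous g)
    (hgc : HasCompactSupport g) (v w : E) :
    Integrable (fun x => fderiv ℝ (fun y => fderiv ℝ h y v) x w • g x) μ :=
  integrable_smul_of_continuousAt_tsupport (fun x hx =>
    (contDiffAt_fderiv_apply (m := 0) (contDiffAt_fderiv_apply (m := 1) (hh x hx) (by norm_num) v)
      (by norm_num) w).continuousAt) hg hgc

lemma integrable_smul_fderiv_fderiv_apply [NormedSpace ℝ E] [IsFiniteMeasureOnCompacts μ]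
    {h : E → ℝ} {g : E → F} (hh : ∀ x ∈ tsupport g, ContinuousAt h x) (hg : ContDiff ℝ 2 g)
    (hgc : HasCompactSupport g) (v w : E) :
    Integrable (fun x => h x • fderiv ℝ (fun y => fderiv ℝ g y v) x w) μ := by
  have hdg : ContDiff ℝ 1 fun y => fderiv ℝ g y v :=
    contDiff_iff_contDiffAt.2 fun x => contDiffAt_fderiv_apply hg.contDiffAt (by norm_num) v
  exact integrable_smul_of_continuousAt_tsupport
    (fun x hx => hh x (tsupport_fderiv_apply_subset ℝ v (tsupport_fderiv_apply_subset ℝ w hx)))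
    ((hdg.continuous_fderiv (by norm_num)).clm_apply continuous_const)
    ((hgc.fderiv_apply ℝ v).fderiv_apply ℝ w)

variable [InnerProductSpace ℝ E] [FiniteDimensional ℝ E] [μ.IsAddHaarMeasure]

lemma integral_smul_laplacian {h : E → ℝ} {g : E → F}
    (hh : ∀ x ∈ tsupport g, ContDiffAt ℝ 2 h x) (hg : ContDiff ℝ 2 g)
    (hgc : HasCompactSupport g) :
    ∫ x, h x • Δ g x ∂μ = ∫ x, Δ h x • g x ∂μ := by
  set b := stdOrthonormalBasis ℝ E
  have hleft (x : E) :
      h x • Δ g x = ∑ i, h x • fderiv ℝ (fun y => fderiv ℝ g y (b i)) x (b i) := by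
    rw [laplacian_eq_sum_fderiv_fderiv b hg.contDiffAt, Finset.smul_sum]
  have hright (x : E) :
      Δ h x • g x = ∑ i, fderiv ℝ (fun y => fderiv ℝ h y (b i)) x (b i) • g x := by
    by_cases hx : x ∈ tsupport g
    · rw [laplacian_eq_sum_fderiv_fderiv b (hh x hx), Finset.sum_smul]
    · simp [image_eq_zero_of_notMem_tsupport hx]
  simp only [hleft, hright]
  rw [integral_finsetSum, integral_finsetSum]
  · exact Finset.sum_congr rfl fun i _ => integral_smul_fderiv_fderiv_apply hh hg hgc _ _
  · exact fun i _ => integrable_fderiv_fderiv_apply_smul hh hg.continuous hgc _ _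
  · exact fun i _ =>
      integrable_smul_fderiv_fderiv_apply (fun x hx => (hh x hx).continuousAt) hg hgc _ _

end IntegrationByParts

section Distributional

variable {E : Type*} [NormedAddCommGroup E] [InnerProductSpace ℝ E] [FiniteDimensional ℝ E]
  [MeasurableSpace E] [BorelSpace E] {μ : Measure E} [μ.IsAddHaarMeasure] {ψ : E → ℝ} {K : ℝ}

lemma integral_mul_neg_laplacian_le {f : E → ℝ} (hψ : ContDiff ℝ 2 ψ)
    (hψc : HasCompactSupport ψ) (hψ0 : ∀ x, 0 ≤ ψ x)
    (hf : ∀ x ∈ tsupport ψ, ContDiffAt ℝ 2 f x) (hsub : ∀ x ∈ tsupport ψ, -Δ f x ≤ K * f x) :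
    ∫ x, f x * -Δ ψ x ∂μ ≤ K * ∫ x, f x * ψ x ∂μ := by
  have hfψ : Integrable (fun x => f x * ψ x) μ :=
    integrable_smul_of_continuousAt_tsupport (fun x hx => (hf x hx).continuousAt)
      hψ.continuous hψc
  have hΔfψ : Integrable (fun x => Δ f x * ψ x) μ :=
    integrable_smul_of_continuousAt_tsupport (fun x hx => continuousAt_laplacian (hf x hx))
      hψ.continuous hψc
  have hpointwise (x : E) : -(Δ f x * ψ x) ≤ K * (f x * ψ x) := by
    by_cases hx : x ∈ tsupport ψ
    · linarith [mul_le_mul_of_nonneg_right (hsub x hx) (hψ0 x)]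
    · simp [image_eq_zero_of_notMem_tsupport hx]
  calc ∫ x, f x * -Δ ψ x ∂μ
      = -∫ x, f x * Δ ψ x ∂μ := by simp only [mul_neg, integral_neg]
    _ = ∫ x, -(Δ f x * ψ x) ∂μ := by
        rw [integral_neg]; exact congrArg _ (integral_smul_laplacian hf hψ hψc)
    _ ≤ ∫ x, K * (f x * ψ x) ∂μ := integral_mono hΔfψ.neg (hfψ.const_mul K) hpointwise
    _ = K * ∫ x, f x * ψ x ∂μ := integral_const_mul K _

lemma integral_norm_mul_neg_laplacian_le {F : Type*} [NormedAddCommGroup F]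
    [InnerProductSpace ℝ F] {w : E → F} (hψ : ContDiff ℝ 2 ψ) (hψc : HasCompactSupport ψ)
    (hψ0 : ∀ x, 0 ≤ ψ x) (hw : ∀ x ∈ tsupport ψ, ContDiffAt ℝ 2 w x) (hK : 0 ≤ K)
    (hsub : ∀ x ∈ tsupport ψ, -⟪w x, Δ w x⟫ ≤ K * ‖w x‖ ^ 2) :
    ∫ x, ‖w x‖ * -Δ ψ x ∂μ ≤ K * ∫ x, ‖w x‖ * ψ x ∂μ := by
  have hsupp : tsupport (fun x => -Δ ψ x) ⊆ tsupport ψ := by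
    simpa only [tsupport, Function.support_fun_neg] using tsupport_laplacian_subset ψ
  have hcont : Continuous fun x => -Δ ψ x :=
    (continuous_iff_continuousAt.2 fun x => continuousAt_laplacian hψ.contDiffAt).neg
  have hreg : ∀ᶠ ε in 𝓝[≠] (0 : ℝ), ∫ x, √(‖w x‖ ^ 2 + ε ^ 2) * -Δ ψ x ∂μ
      ≤ K * ∫ x, √(‖w x‖ ^ 2 + ε ^ 2) * ψ x ∂μ := by
    filter_upwards [self_mem_nhdsWithin] with ε hε
    exact integral_mul_neg_laplacian_le hψ hψc hψ0
      (fun x hx => contDiffAt_sqrt_norm_sq_add_sq (hw x hx) hε)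
      fun x hx => neg_laplacian_sqrt_norm_sq_add_sq_le (hw x hx) hε hK (hsub x hx)
  have hleft := tendsto_integral_sqrt_norm_sq_add_sq_mul (μ := μ)
    (fun x hx => (hw x (hsupp hx)).continuousAt) hcont
    (hψc.of_isClosed_subset (isClosed_tsupport _) hsupp)
  have hright := (tendsto_integral_sqrt_norm_sq_add_sq_mul (μ := μ)
    (fun x hx => (hw x hx).continuousAt) hψ.continuous hψc).const_mul K
  exact le_of_tendsto_of_tendsto (hleft.mono_left nhdsWithin_le_nhds)
    (hright.mono_left nhdsWithin_le_nhds) hreg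

theorem bochner_method_general {Ω : Set E} (hΩ : IsOpen Ω) {u : E → ℝ}
    (hu : ContDiffOn ℝ 3 u Ω) {φ : ℝ → ℝ} (hφ : ∀ x ∈ Ω, DifferentiableAt ℝ φ (u x))
    (heq : ∀ x ∈ Ω, -Δ u x = φ (u x)) (hK : 0 ≤ K) (hφK : ∀ x ∈ Ω, deriv φ (u x) ≤ K) :
    (∀ ε : ℝ, ε ≠ 0 → ∀ x ∈ Ω,
      -Δ (fun y => √(‖∇ u y‖ ^ 2 + ε ^ 2)) x ≤ K * √(‖∇ u x‖ ^ 2 + ε ^ 2)) ∧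
    (∀ ψ : E → ℝ, ContDiff ℝ 2 ψ → HasCompactSupport ψ → tsupport ψ ⊆ Ω → (∀ x, 0 ≤ ψ x) →
      ∫ x in Ω, ‖∇ u x‖ * -Δ ψ x ∂μ ≤ K * ∫ x in Ω, ‖∇ u x‖ * ψ x ∂μ) := by
  have hgrad : ∀ x ∈ Ω, ContDiffAt ℝ 2 (∇ u) x := fun x hx =>
    contDiffAt_gradient (hu.contDiffAt (hΩ.mem_nhds hx)) (by norm_num)
  have hsub : ∀ x ∈ Ω, -⟪∇ u x, Δ (∇ u) x⟫ ≤ K * ‖∇ u x‖ ^ 2 := fun x hx => by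
    rw [laplacian_gradient_of_neg_laplacian_eq (hu.contDiffAt (hΩ.mem_nhds hx)) (hφ x hx)
      (eventually_of_mem (hΩ.mem_nhds hx) heq), inner_neg_right, neg_neg, real_inner_smul_right,
      real_inner_self_eq_norm_sq]
    exact mul_le_mul_of_nonneg_right (hφK x hx) (sq_nonneg _)
  refine ⟨fun ε hε x hx =>
    neg_laplacian_sqrt_norm_sq_add_sq_le (hgrad x hx) hε hK (hsub x hx), ?_⟩
  intro ψ hψ hψc hψΩ hψ0
  rw [setIntegral_eq_integral_of_forall_compl_eq_zero fun x hx => ?_,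
    setIntegral_eq_integral_of_forall_compl_eq_zero fun x hx => ?_]
  · exact integral_norm_mul_neg_laplacian_le hψ hψc hψ0 (fun x hx => hgrad x (hψΩ hx)) hK
      fun x hx => hsub x (hψΩ hx)
  · rw [image_eq_zero_of_notMem_tsupport (Set.notMem_subset hψΩ hx), mul_zero]
  · rw [image_eq_zero_of_notMem_tsupport
      (Set.notMem_subset ((tsupport_laplacian_subset ψ).trans hψΩ) hx), neg_zero, mul_zero]

end Distributional

lemma lap_eq_laplacian {n : ℕ} {f : EuclideanSpace ℝ (Fin n) → ℝ} {x : EuclideanSpace ℝ (Fin n)}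
    (hf : ContDiffAt ℝ 2 f x) : lap f x = Δ f x := by
  simp [lap, laplacian_eq_sum_fderiv_fderiv (EuclideanSpace.basisFun (Fin n) ℝ) hf]

lemma deriv_const_mul_le_max_sSup {φ : ℝ → ℝ} (hφ : ContDiff ℝ 1 φ) (c : ℝ) {a b t : ℝ}
    (ht : t ∈ Set.Icc a b) :
    deriv (fun s => c * φ s) t ≤ max 0 (sSup ((fun s => c * deriv φ s) '' Set.Icc a b)) := by
  have hcont : Continuous fun s => c * deriv φ s :=
    continuous_const.mul (hφ.continuous_deriv le_rfl)
  rw [deriv_const_mul_field]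
  exact le_max_of_le_right
    (le_csSup (isCompact_Icc.image hcont).bddAbove (Set.mem_image_of_mem _ ht))

/-- Bochner method (Euclidean model): if `u` is a bounded smooth solution of
`-Δu = c φ(u)` on `Ω`, then with `c₁ = max(0, sup_{[a,b]} c φ')`, the regularized
gradient length `f_ε = (‖∇u‖² + ε²)^{1/2}` satisfies `-Δf_ε ≤ c₁ f_ε` pointwise, and
consequently `-Δ‖∇u‖ ≤ c₁ ‖∇u‖` holds distributionally on `Ω`. -/
theorem bochner_method {n : ℕ} (Ω : Set (EuclideanSpace ℝ (Fin n))) (hΩ : IsOpen Ω)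
    (φ : ℝ → ℝ) (hφ : ContDiff ℝ 1 φ) (c : ℝ)
    (u : EuclideanSpace ℝ (Fin n) → ℝ) (hu : ContDiffOn ℝ (⊤ : ℕ∞) u Ω)
    (a b : ℝ) (hab : a ≤ b) (hua : ∀ x ∈ Ω, a ≤ u x) (hub : ∀ x ∈ Ω, u x ≤ b)
    (heq : ∀ x ∈ Ω, -lap u x = c * φ (u x))
    (c₁ : ℝ) (hc₁ : c₁ = max 0 (sSup ((fun t => c * deriv φ t) '' Set.Icc a b))) :
    (∀ ε : ℝ, 0 < ε → ∀ x ∈ Ω,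
      -lap (fun y => Real.sqrt (‖gradient u y‖ ^ 2 + ε ^ 2)) x
        ≤ c₁ * Real.sqrt (‖gradient u x‖ ^ 2 + ε ^ 2)) ∧
    (∀ ψ : EuclideanSpace ℝ (Fin n) → ℝ, ContDiff ℝ (⊤ : ℕ∞) ψ → HasCompactSupport ψ →
      tsupport ψ ⊆ Ω → (∀ x, 0 ≤ ψ x) →
      ∫ x in Ω, ‖gradient u x‖ * (-lap ψ x) ≤ c₁ * ∫ x in Ω, ‖gradient u x‖ * ψ x) := by
  have hu3 : ∀ x ∈ Ω, ContDiffAt ℝ 3 u x := fun x hx =>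
    (hu.contDiffAt (hΩ.mem_nhds hx)).of_le (by norm_cast)
  have hc₁_nonneg : 0 ≤ c₁ := hc₁ ▸ le_max_left _ _
  obtain ⟨hpointwise, hdistributional⟩ := bochner_method_general (μ := volume) hΩ
    (hu.of_le (by norm_cast)) (φ := fun t => c * φ t)
    (fun x _ => ((hφ.differentiable (by norm_num)).const_mul c) (u x))
    (fun x hx => lap_eq_laplacian (f := u) ((hu3 x hx).of_le (by norm_num)) ▸ heq x hx) hc₁_nonneg
    (fun x hx => hc₁ ▸ deriv_const_mul_le_max_sSup hφ c ⟨hua x hx, hub x hx⟩)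
  refine ⟨fun ε hε x hx => ?_, fun ψ hψ hψc hψΩ hψ0 => ?_⟩
  · rw [lap_eq_laplacian (contDiffAt_sqrt_norm_sq_add_sq
      (contDiffAt_gradient (hu3 x hx) (by norm_num)) hε.ne')]
    exact hpointwise ε hε.ne' x hx
  · have hψ2 : ContDiff ℝ 2 ψ := hψ.of_le (by norm_cast)
    simp only [lap_eq_laplacian hψ2.contDiffAt]
    exact hdistributional ψ hψ2 hψc hψΩ hψ0
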